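/- Weighted Hardy-type inequality: Let N ≥ 1 and K(y) = exp(|y|²/4). There exists a constant c > 0 such that for every locally integrable f : ℝ^N → ℝ with a weak gradient g : ℝ^N → ℝ^N satisfying ∫_{ℝ^N} K(y)|f(y)|² dy < ∞ and ∫_{ℝ^N} K(y)|g(y)|² dy < ∞, one has ∫_{ℝ^N} K(y) |f(y)|² |y|² dy ≤ c ∫_{ℝ^N} K(y) |g(y)|² dy. -/

import Mathlib

open MeasureTheory

/-- `g` is a weak gradient of the locally integrable function `f` on `ℝ^N`. -/
def HasWeakGradient {N : ℕ} (f : EuclideanSpace ℝ (Fin N) → ℝ)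
    (g : EuclideanSpace ℝ (Fin N) → EuclideanSpace ℝ (Fin N)) : Prop :=
  MeasureTheory.LocallyIntegrable f volume ∧
  ∀ φ : EuclideanSpace ℝ (Fin N) → ℝ, ContDiff ℝ (⊤ : ℕ∞) φ → HasCompactSupport φ →
    ∀ i : Fin N,
      ∫ y, f y * fderiv ℝ φ y (EuclideanSpace.single i 1) = -∫ y, g y i * φ y

/-!
For smooth `V` with `∂ₑ²V ≥ 0`, test the weak product rule `∂ₑ(f²) = 2 f ∂ₑf` against
`exp V * η² * ∂ₑV`, where `η` is a cutoff. The terms without `∂ₑ²V` complete to a square; dropping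
it together with the `∂ₑ²V` term gives `∫ exp V * (∂ₑV * η f)² ≤ 4 ∫ exp V * (∂ₑ(η f))²`. Letting
`η → 1` removes the cutoff. For the Gaussian weight `V = a ‖y‖²` one has `∂ₑV = 2 a ⟪y, e⟫`, and
summing over an orthonormal basis turns `⟪y, e⟫²` into `‖y‖²`.
-/

open Filter Topology
open scoped ContDiff Convolution InnerProductSpace

theorem integrable_and_integral_le_of_tendsto {α : Type*} [MeasurableSpace α] {μ : Measure α}
    {F : ℕ → α → ℝ} {f : α → ℝ} {a : ℕ → ℝ} {A : ℝ} (hF : ∀ n, Integrable (F n) μ)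
    (hF_nonneg : ∀ n, 0 ≤ᵐ[μ] F n) (hlim : ∀ᵐ x ∂μ, Tendsto (F · x) atTop (𝓝 (f x)))
    (hle : ∀ n, ∫ x, F n x ∂μ ≤ a n) (ha : Tendsto a atTop (𝓝 A)) :
    Integrable f μ ∧ ∫ x, f x ∂μ ≤ A := by
  have hf_nonneg : 0 ≤ᵐ[μ] f := by
    filter_upwards [hlim, ae_all_iff.2 hF_nonneg] with x hx h0 using ge_of_tendsto' hx h0
  have hf_meas : AEStronglyMeasurable f μ :=
    aestronglyMeasurable_of_tendsto_ae atTop (fun n => (hF n).aestronglyMeasurable) hlim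
  have hA : 0 ≤ A := ge_of_tendsto' ha fun n => (integral_nonneg_of_ae (hF_nonneg n)).trans (hle n)
  have fatou : ∫⁻ x, ENNReal.ofReal (f x) ∂μ ≤ ENNReal.ofReal A := calc
    ∫⁻ x, ENNReal.ofReal (f x) ∂μ = ∫⁻ x, liminf (fun n => ENNReal.ofReal (F n x)) atTop ∂μ :=
      lintegral_congr_ae <| by
        filter_upwards [hlim] with x hx using (ENNReal.tendsto_ofReal hx).liminf_eq.symm
    _ ≤ liminf (fun n => ∫⁻ x, ENNReal.ofReal (F n x) ∂μ) atTop :=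
      lintegral_liminf_le' fun n => (hF n).aestronglyMeasurable.aemeasurable.ennreal_ofReal
    _ ≤ liminf (fun n => ENNReal.ofReal (a n)) atTop :=
      liminf_le_liminf <| .of_forall fun n => by
        rw [← ofReal_integral_eq_lintegral_ofReal (hF n) (hF_nonneg n)]
        exact ENNReal.ofReal_le_ofReal (hle n)
    _ = ENNReal.ofReal A := (ENNReal.tendsto_ofReal ha).liminf_eq
  have hf : Integrable f μ :=
    ⟨hf_meas, (hasFiniteIntegral_iff_ofReal hf_nonneg).2 (fatou.trans_lt ENNReal.ofReal_lt_top)⟩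
  rw [← ofReal_integral_eq_lintegral_ofReal hf hf_nonneg, ENNReal.ofReal_le_ofReal_iff hA] at fatou
  exact ⟨hf, fatou⟩

theorem continuous_convolution_of_memLp_two {G : Type*} [AddCommGroup G] [TopologicalSpace G]
    [IsTopologicalAddGroup G] [MeasurableSpace G] [BorelSpace G] {μ : Measure G}
    [μ.IsAddLeftInvariant] [μ.IsNegInvariant] [IsLocallyFiniteMeasure μ]
    [μ.InnerRegularCompactLTTop] {f g : G → ℝ} (hf : MemLp f 2 μ) (hg : MemLp g 2 μ) :
    Continuous (f ⋆[ContinuousLinearMap.mul ℝ ℝ, μ] g) := by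
  have : Fact ((2 : ENNReal) ≠ ⊤) := ⟨ENNReal.ofNat_ne_top⟩
  have hg_neg : MemLp (fun t => g (-t)) 2 μ :=
    hg.comp_measurePreserving (Measure.measurePreserving_neg μ)
  have hg_translate (x : G) : MemLp (fun t => g (-(-x +ᵥ t))) 2 μ :=
    hg_neg.comp_measurePreserving (measurePreserving_vadd (-x) μ)
  have h_eq : f ⋆[ContinuousLinearMap.mul ℝ ℝ, μ] g =
      fun x : G => ⟪DomAddAct.mk (-x) +ᵥ hg_neg.toLp, hf.toLp⟫_ℝ := by
    ext x
    rw [DomAddAct.mk_vadd_toLp, L2.inner_def, convolution_def]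
    refine integral_congr_ae ?_
    filter_upwards [hf.coeFn_toLp, (hg_translate x).coeFn_toLp] with t hft hgt
    rw [hft, hgt]
    simp [sub_eq_add_neg, add_comm]
  rw [h_eq]
  exact ((DomAddAct.continuous_mk.comp continuous_neg).vadd continuous_const).inner
    continuous_const

section Mollification

variable {E : Type*} [NormedAddCommGroup E] [NormedSpace ℝ E] [FiniteDimensional ℝ E]
  [MeasurableSpace E] [BorelSpace E] {μ : Measure E} [μ.IsAddHaarMeasure]

theorem tendsto_integral_mul_normed_convolution {ι : Type*} {l : Filter ι}
    {ρ : ι → ContDiffBump (0 : E)} (hρ : Tendsto (fun i => (ρ i).rOut) l (𝓝 0)) {a b : E → ℝ}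
    (ha : MemLp a 2 μ) (hb : MemLp b 2 μ) :
    Tendsto (fun i => ∫ x, a x * ((ρ i).normed μ ⋆[ContinuousLinearMap.lsmul ℝ ℝ, μ] b) x ∂μ) l
      (𝓝 (∫ x, a x * b x ∂μ)) := by
  have ha_neg : MemLp (fun t => a (-t)) 2 μ :=
    ha.comp_measurePreserving (Measure.measurePreserving_neg μ)
  have h_assoc : ∀ φ : ContDiffBump (0 : E),
      (φ.normed μ ⋆[ContinuousLinearMap.lsmul ℝ ℝ, μ]
        (b ⋆[ContinuousLinearMap.mul ℝ ℝ, μ] fun t => a (-t))) 0 =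
      ∫ x, a x * (φ.normed μ ⋆[ContinuousLinearMap.lsmul ℝ ℝ, μ] b) x ∂μ := fun φ => by
    have h := convolution_assoc (f := φ.normed μ) (g := b) (k := fun t => a (-t)) (μ := μ) (ν := μ)
      (ContinuousLinearMap.lsmul ℝ ℝ) (ContinuousLinearMap.mul ℝ ℝ)
      (ContinuousLinearMap.lsmul ℝ ℝ) (ContinuousLinearMap.mul ℝ ℝ)
      (fun x y z => by simp [mul_assoc]) (x₀ := 0)
      φ.continuous_normed.aestronglyMeasurable hb.1 ha_neg.1
      (.of_forall fun y => φ.hasCompactSupport_normed.convolutionExists_left _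
        φ.continuous_normed (hb.locallyIntegrable (by norm_num)) y)
      (.of_forall fun x => hb.norm.integrable_mul
        (ha_neg.norm.comp_measurePreserving (Measure.measurePreserving_sub_left μ x)))
      (φ.hasCompactSupport_normed.norm.convolutionExists_left _ φ.continuous_normed.norm
        (continuous_convolution_of_memLp_two hb.norm ha_neg.norm).locallyIntegrable 0)
    rw [← h, convolution_def]
    simp [mul_comm]
  have h_limit := ContDiffBump.convolution_tendsto_right_of_continuous (μ := μ) hρ
    (continuous_convolution_of_memLp_two hb ha_neg) 0
  simpa only [h_assoc, convolution_def, ContinuousLinearMap.mul_apply', zero_sub, neg_neg,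
    mul_comm (b _)] using h_limit

end Mollification

section Cutoff

variable {E : Type*} [NormedAddCommGroup E] [NormedSpace ℝ E] [FiniteDimensional ℝ E]

/-- A sequence of smooth compactly supported cutoff functions exhausting `E`: the dilates by
`n + 1` of one bump function equal to `1` on the unit ball. -/
noncomputable def cutoff (n : ℕ) (y : E) : ℝ :=
  (default : ContDiffBump (0 : E)) ((n + 1 : ℝ)⁻¹ • y)

theorem contDiff_cutoff (n : ℕ) : ContDiff ℝ ∞ (cutoff n : E → ℝ) :=
  ContDiffBump.contDiff _ |>.comp (contDiff_id.const_smul _)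

theorem hasCompactSupport_cutoff (n : ℕ) : HasCompactSupport (cutoff n : E → ℝ) :=
  (ContDiffBump.hasCompactSupport _).comp_smul (by positivity)

theorem abs_cutoff_le_one (n : ℕ) (y : E) : |cutoff n y| ≤ 1 := by
  rw [cutoff, abs_of_nonneg (ContDiffBump.nonneg _)]
  exact ContDiffBump.le_one _

theorem cutoff_eq_one {n : ℕ} {y : E} (hy : ‖y‖ ≤ n) : cutoff n y = 1 := by
  refine ContDiffBump.one_of_mem_closedBall _ ?_
  rw [mem_closedBall_zero_iff, norm_smul, norm_inv, Real.norm_of_nonneg (by positivity)]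
  exact inv_mul_le_one_of_le₀ (hy.trans (by linarith)) (by positivity)

theorem fderiv_cutoff_eq_zero {n : ℕ} {y : E} (hy : ‖y‖ < n) :
    fderiv ℝ (cutoff n : E → ℝ) y = 0 := by
  have h_one : cutoff n =ᶠ[𝓝 y] fun _ => (1 : ℝ) := by
    filter_upwards [continuous_norm.continuousAt.eventually_lt_const hy] with z hz
    exact cutoff_eq_one hz.le
  rw [h_one.fderiv_eq, fderiv_fun_const, Pi.zero_apply]

theorem tendsto_cutoff (y : E) : Tendsto (cutoff · y) atTop (𝓝 1) := by
  refine tendsto_const_nhds.congr' ?_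
  filter_upwards [eventually_ge_atTop ⌈‖y‖⌉₊] with n hn
  exact (cutoff_eq_one (Nat.ceil_le.1 hn)).symm

theorem exists_abs_fderiv_cutoff_le (e : E) :
    ∃ C, ∀ (n : ℕ) (y : E), |fderiv ℝ (cutoff n) y e| ≤ (n + 1 : ℝ)⁻¹ * C := by
  set η : ContDiffBump (0 : E) := default
  obtain ⟨C, hC⟩ := (η.hasCompactSupport.fderiv_apply (𝕜 := ℝ) e).exists_bound_of_continuous
    ((η.contDiff.continuous_fderiv one_ne_zero).clm_apply continuous_const)
  refine ⟨C, fun n y => ?_⟩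
  have h : fderiv ℝ (cutoff n) y = (n + 1 : ℝ)⁻¹ • fderiv ℝ η ((n + 1 : ℝ)⁻¹ • y) :=
    fderiv_comp_smul _
  rw [h, smul_apply, smul_eq_mul, abs_mul, abs_of_nonneg (by positivity)]
  gcongr
  exact hC _

theorem tendsto_fderiv_cutoff (y e : E) :
    Tendsto (fun n => fderiv ℝ (cutoff n) y e) atTop (𝓝 0) := by
  obtain ⟨C, hC⟩ := exists_abs_fderiv_cutoff_le e
  refine squeeze_zero_norm (fun n => hC n y) ?_
  simpa [one_div] using (tendsto_one_div_add_atTop_nhds_zero_nat (𝕜 := ℝ)).mul_const C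

end Cutoff

/-- `h` is a weak derivative of `f` in the direction `e`. Both functions are required to be locally
integrable, so that no integral against a test function takes a junk value. -/
structure HasWeakLineDeriv {E : Type*} [NormedAddCommGroup E] [NormedSpace ℝ E] [MeasurableSpace E]
    (f h : E → ℝ) (e : E) (μ : Measure E) : Prop where
  locallyIntegrable : LocallyIntegrable f μ
  locallyIntegrable_deriv : LocallyIntegrable h μ
  integral_mul_fderiv : ∀ φ : E → ℝ, ContDiff ℝ ∞ φ → HasCompactSupport φ →
    ∫ y, f y * fderiv ℝ φ y e ∂μ = -∫ y, h y * φ y ∂μ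

theorem memLp_two_mul_of_hasCompactSupport {X : Type*} [TopologicalSpace X] [T2Space X]
    [MeasurableSpace X] [OpensMeasurableSpace X] {μ : Measure X} {f χ : X → ℝ}
    (hf : LocallyIntegrable f μ) (hf_sq : LocallyIntegrable (fun y => f y ^ 2) μ)
    (hχ : Continuous χ) (hχ_supp : HasCompactSupport χ) : MemLp (fun y => χ y * f y) 2 μ := by
  have h_meas : AEStronglyMeasurable (fun y => χ y * f y) μ :=
    (hf.integrable_smul_left_of_hasCompactSupport hχ hχ_supp).aestronglyMeasurable
  rw [memLp_two_iff_integrable_sq h_meas]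
  have hχ_sq_supp : HasCompactSupport fun y => χ y ^ 2 :=
    hχ_supp.comp_left (g := (· ^ 2)) (zero_pow two_ne_zero)
  simpa only [mul_pow, smul_eq_mul] using
    hf_sq.integrable_smul_left_of_hasCompactSupport (by fun_prop) hχ_sq_supp

theorem HasWeakLineDeriv.integrable_and_integral_mul_fderiv_add_eq_zero {E : Type*}
    [NormedAddCommGroup E] [NormedSpace ℝ E] [MeasurableSpace E] [BorelSpace E] {μ : Measure E}
    {e : E} {f h φ : E → ℝ} (hfh : HasWeakLineDeriv f h e μ)
    (hφ : ContDiff ℝ ∞ φ) (hφ_supp : HasCompactSupport φ) :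
    Integrable (fun y => f y * fderiv ℝ φ y e + h y * φ y) μ ∧
      ∫ y, (f y * fderiv ℝ φ y e + h y * φ y) ∂μ = 0 := by
  have h_int_left : Integrable (fun y => f y * fderiv ℝ φ y e) μ :=
    hfh.locallyIntegrable.integrable_smul_right_of_hasCompactSupport (by fun_prop (disch := simp))
      (hφ_supp.fderiv_apply (𝕜 := ℝ) e)
  have h_int_right : Integrable (fun y => h y * φ y) μ :=
    hfh.locallyIntegrable_deriv.integrable_smul_right_of_hasCompactSupport hφ.continuous hφ_supp
  refine ⟨h_int_left.add h_int_right, ?_⟩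
  rw [integral_add h_int_left h_int_right, hfh.integral_mul_fderiv φ hφ hφ_supp, neg_add_cancel]

namespace HasWeakLineDeriv

variable {E : Type*} [NormedAddCommGroup E] [NormedSpace ℝ E] [FiniteDimensional ℝ E]
  [MeasurableSpace E] [BorelSpace E] {μ : Measure E} {e : E} {f h : E → ℝ}

theorem fderiv_convolution [μ.IsAddHaarMeasure] (hfh : HasWeakLineDeriv f h e μ) {φ : E → ℝ}
    (hφ : ContDiff ℝ ∞ φ) (hφ_supp : HasCompactSupport φ) (x : E) :
    fderiv ℝ (φ ⋆[ContinuousLinearMap.lsmul ℝ ℝ, μ] f) x e =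
      (φ ⋆[ContinuousLinearMap.lsmul ℝ ℝ, μ] h) x := by
  have hφ_one : ContDiff ℝ 1 φ := hφ.of_le (by simp)
  have h_deriv := hφ_supp.hasFDerivAt_convolution_left (ContinuousLinearMap.lsmul ℝ ℝ) hφ_one
    hfh.locallyIntegrable x
  have h_int := ((hφ_supp.fderiv (𝕜 := ℝ)).convolutionExists_left
    ((ContinuousLinearMap.lsmul ℝ ℝ : ℝ →L[ℝ] ℝ →L[ℝ] ℝ).precompL E)
    (hφ_one.continuous_fderiv one_ne_zero) hfh.locallyIntegrable x).integrable_swap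
  have h_reflect (t : E) : fderiv ℝ (fun t => φ (x - t)) t e = -fderiv ℝ φ (x - t) e := by
    have h_comp : HasFDerivAt (fun t => φ (x - t)) _ t :=
      (hφ_one.differentiable one_ne_zero (x - t)).hasFDerivAt.comp t
        ((hasFDerivAt_id t).const_sub x)
    simp [h_comp.fderiv]
  have h_test := hfh.integral_mul_fderiv (fun t => φ (x - t)) (by fun_prop)
    (hφ_supp.comp_homeomorph (Homeomorph.subLeft x))
  simp only [h_reflect, mul_neg, integral_neg, neg_inj] at h_test
  rw [h_deriv.fderiv, convolution_eq_swap, ContinuousLinearMap.integral_apply h_int,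
    convolution_eq_swap]
  simpa [mul_comm] using h_test

theorem contDiff_mul (hfh : HasWeakLineDeriv f h e μ) {χ : E → ℝ} (hχ : ContDiff ℝ ∞ χ) :
    HasWeakLineDeriv (fun y => χ y * f y) (fun y => χ y * h y + fderiv ℝ χ y e * f y) e μ := by
  have hχ_deriv : Continuous fun y => fderiv ℝ χ y e := by fun_prop (disch := simp)
  have h_loc_f := hfh.locallyIntegrable
  have h_loc_h := hfh.locallyIntegrable_deriv
  refine ⟨h_loc_f.continuous_mul hχ.continuous,
    (h_loc_h.continuous_mul hχ.continuous).add (h_loc_f.continuous_mul hχ_deriv),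
    fun φ hφ hφ_supp => ?_⟩
  have hφ_deriv : Continuous fun y => fderiv ℝ φ y e := by fun_prop (disch := simp)
  have h_int_h : Integrable (fun y => h y * (χ y * φ y)) μ :=
    h_loc_h.integrable_smul_right_of_hasCompactSupport (by fun_prop) hφ_supp.mul_left
  have h_int_χ : Integrable (fun y => f y * (fderiv ℝ χ y e * φ y)) μ :=
    h_loc_f.integrable_smul_right_of_hasCompactSupport (by fun_prop) hφ_supp.mul_left
  have h_int_φ : Integrable (fun y => f y * (χ y * fderiv ℝ φ y e)) μ :=
    h_loc_f.integrable_smul_right_of_hasCompactSupport (by fun_prop)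
      (hφ_supp.fderiv_apply (𝕜 := ℝ) e).mul_left
  have h_leibniz (y : E) :
      fderiv ℝ (fun y => χ y * φ y) y e = χ y * fderiv ℝ φ y e + fderiv ℝ χ y e * φ y := by
    rw [fderiv_fun_mul (hχ.differentiable (by simp) y) (hφ.differentiable (by simp) y)]
    simp [mul_comm]
  have h_test := hfh.integral_mul_fderiv _ (hχ.mul hφ) (hφ_supp.mul_left (f := χ))
  simp only [h_leibniz, mul_add, integral_add h_int_φ h_int_χ] at h_test
  calc
    ∫ y, χ y * f y * fderiv ℝ φ y e ∂μ = ∫ y, f y * (χ y * fderiv ℝ φ y e) ∂μ := by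
      congr! 2 with y; ring
    _ = -(∫ y, h y * (χ y * φ y) ∂μ + ∫ y, f y * (fderiv ℝ χ y e * φ y) ∂μ) := by linarith
    _ = -∫ y, (χ y * h y + fderiv ℝ χ y e * f y) * φ y ∂μ := by
      rw [← integral_add h_int_h h_int_χ]
      congr! 3 with y; ring

theorem integral_mul_fderiv_mul_convolution [μ.IsAddHaarMeasure] (hfh : HasWeakLineDeriv f h e μ)
    {κ φ : E → ℝ} (hκ : ContDiff ℝ ∞ κ) (hκ_supp : HasCompactSupport κ) (hφ : ContDiff ℝ ∞ φ)
    (hφ_supp : HasCompactSupport φ) :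
    ∫ y, fderiv ℝ φ y e * f y * (κ ⋆[ContinuousLinearMap.lsmul ℝ ℝ, μ] f) y ∂μ =
      -(∫ y, φ y * h y * (κ ⋆[ContinuousLinearMap.lsmul ℝ ℝ, μ] f) y ∂μ +
        ∫ y, φ y * f y * (κ ⋆[ContinuousLinearMap.lsmul ℝ ℝ, μ] h) y ∂μ) := by
  have h_smooth {w : E → ℝ} (hw : LocallyIntegrable w μ) :
      ContDiff ℝ ∞ (κ ⋆[ContinuousLinearMap.lsmul ℝ ℝ, μ] w) :=
    hκ_supp.contDiff_convolution_left _ hκ hw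
  have h_int {w v : E → ℝ} (hw : LocallyIntegrable w μ) (hv : LocallyIntegrable v μ) :
      Integrable (fun y => φ y * w y * (κ ⋆[ContinuousLinearMap.lsmul ℝ ℝ, μ] v) y) μ := by
    refine (hw.integrable_smul_left_of_hasCompactSupport
      (hφ.continuous.mul (h_smooth hv).continuous) hφ_supp.mul_right).congr (.of_forall fun y => ?_)
    simp only [Pi.mul_apply, smul_eq_mul]
    ring
  have h_test :=
    (hfh.contDiff_mul (h_smooth hfh.locallyIntegrable)).integral_mul_fderiv φ hφ hφ_supp
  simp only [hfh.fderiv_convolution hκ hκ_supp] at h_test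
  rw [← integral_add (h_int hfh.locallyIntegrable_deriv hfh.locallyIntegrable)
    (h_int hfh.locallyIntegrable hfh.locallyIntegrable_deriv)]
  convert h_test using 3 with y
  · ring
  · ext y
    ring

theorem integral_sq_mul_fderiv_of_memLp [μ.IsAddHaarMeasure] (hfh : HasWeakLineDeriv f h e μ)
    (hf : MemLp f 2 μ) (hh : MemLp h 2 μ) {φ : E → ℝ} (hφ : ContDiff ℝ ∞ φ)
    (hφ_supp : HasCompactSupport φ) :
    ∫ y, f y ^ 2 * fderiv ℝ φ y e ∂μ = -∫ y, 2 * (f y * h y) * φ y ∂μ := by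
  let ρ (n : ℕ) : ContDiffBump (0 : E) :=
    ⟨1 / (2 * (n + 1)), 1 / (n + 1), by positivity, by gcongr; linarith⟩
  have hρ : Tendsto (fun n => (ρ n).rOut) atTop (𝓝 0) := tendsto_one_div_add_atTop_nhds_zero_nat
  have hφ_deriv : Continuous fun y => fderiv ℝ φ y e := by fun_prop (disch := simp)
  have h_memLp {w ψ : E → ℝ} (hw : MemLp w 2 μ) (hψ : Continuous ψ)
      (hψ_supp : HasCompactSupport ψ) : MemLp (fun y => ψ y * w y) 2 μ :=
    hw.mul (hψ.memLp_top_of_hasCompactSupport hψ_supp μ)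
  have h_lim {a b : E → ℝ} := tendsto_integral_mul_normed_convolution (μ := μ) hρ (a := a) (b := b)
  have h_limit : ∫ y, fderiv ℝ φ y e * f y * f y ∂μ =
      -(∫ y, φ y * h y * f y ∂μ + ∫ y, φ y * f y * h y ∂μ) :=
    tendsto_nhds_unique
      ((h_lim (h_memLp hf hφ_deriv (hφ_supp.fderiv_apply (𝕜 := ℝ) e)) hf).congr fun n =>
        hfh.integral_mul_fderiv_mul_convolution (ρ n).contDiff_normed (ρ n).hasCompactSupport_normed
          hφ hφ_supp)
      ((h_lim (h_memLp hh hφ.continuous hφ_supp) hf).add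
        (h_lim (h_memLp hf hφ.continuous hφ_supp) hh)).neg
  have h_lhs (y : E) : fderiv ℝ φ y e * f y * f y = f y ^ 2 * fderiv ℝ φ y e := by ring
  have h_symm (y : E) : φ y * h y * f y = φ y * f y * h y := by ring
  have h_rhs (y : E) : 2 * (φ y * f y * h y) = 2 * (f y * h y) * φ y := by ring
  simpa only [h_lhs, h_symm, ← two_mul, ← integral_const_mul, h_rhs] using h_limit

theorem sq [μ.IsAddHaarMeasure] (hfh : HasWeakLineDeriv f h e μ)
    (hf_sq : LocallyIntegrable (fun y => f y ^ 2) μ)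
    (hh_sq : LocallyIntegrable (fun y => h y ^ 2) μ) :
    HasWeakLineDeriv (fun y => f y ^ 2) (fun y => 2 * (f y * h y)) e μ := by
  have h_loc : LocallyIntegrable (fun y => 2 * (f y * h y)) μ := by
    refine (hf_sq.add hh_sq).mono
      ((hfh.locallyIntegrable.aestronglyMeasurable.mul
        hfh.locallyIntegrable_deriv.aestronglyMeasurable).const_mul 2) (.of_forall fun y => ?_)
    have h_nonneg : 0 ≤ f y ^ 2 + h y ^ 2 := by positivity
    rw [Pi.add_apply, Real.norm_of_nonneg h_nonneg, Real.norm_eq_abs, abs_le]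
    constructor <;> nlinarith [sq_nonneg (f y + h y), sq_nonneg (f y - h y)]
  refine ⟨hf_sq, h_loc, fun φ hφ hφ_supp => ?_⟩
  obtain ⟨R, hR⟩ := hφ_supp.isCompact.isBounded.exists_norm_le
  set χ : E → ℝ := cutoff (⌈R⌉₊ + 1)
  have h_norm_lt {y : E} (hy : y ∈ tsupport φ) : ‖y‖ < (⌈R⌉₊ + 1 : ℕ) := by
    push_cast
    linarith [hR y hy, Nat.le_ceil R]
  have hχ_eq {y : E} (hy : y ∈ tsupport φ) : χ y = 1 := cutoff_eq_one (h_norm_lt hy).le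
  have hχ_smooth : ContDiff ℝ ∞ χ := contDiff_cutoff _
  have hχ_supp : HasCompactSupport χ := hasCompactSupport_cutoff _
  have hχ_deriv : Continuous fun y => fderiv ℝ χ y e := by fun_prop (disch := simp)
  have h_memLp_f := memLp_two_mul_of_hasCompactSupport hfh.locallyIntegrable hf_sq
    hχ_smooth.continuous hχ_supp
  have h_memLp_h := (memLp_two_mul_of_hasCompactSupport hfh.locallyIntegrable_deriv hh_sq
      hχ_smooth.continuous hχ_supp).add
    (memLp_two_mul_of_hasCompactSupport hfh.locallyIntegrable hf_sq hχ_deriv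
      (hχ_supp.fderiv_apply (𝕜 := ℝ) e))
  have h_local := (hfh.contDiff_mul hχ_smooth).integral_sq_mul_fderiv_of_memLp h_memLp_f h_memLp_h
    hφ hφ_supp
  convert h_local using 3 with y
  · by_cases hy : y ∈ tsupport φ
    · rw [hχ_eq hy, one_mul]
    · simp [fderiv_of_notMem_tsupport ℝ hy]
  · ext y
    by_cases hy : y ∈ tsupport φ
    · simp [hχ_eq hy, χ, fderiv_cutoff_eq_zero (h_norm_lt hy)]
    · simp [image_eq_zero_of_notMem_tsupport hy]

end HasWeakLineDeriv

theorem locallyIntegrable_of_integrable_exp_mul {X : Type*} [TopologicalSpace X]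
    [LocallyCompactSpace X] [T2Space X] [MeasurableSpace X] [OpensMeasurableSpace X]
    {μ : Measure X} {V u : X → ℝ} (hV : Continuous V)
    (hu : Integrable (fun y => Real.exp (V y) * u y) μ) : LocallyIntegrable u μ := by
  convert hu.locallyIntegrable.continuous_mul (g := fun y => Real.exp (-V y)) (by fun_prop)
    using 2 with y
  rw [← mul_assoc, ← Real.exp_add, neg_add_cancel, Real.exp_zero, one_mul]

theorem fderiv_exp_mul_sq_mul_apply {E : Type*} [NormedAddCommGroup E] [NormedSpace ℝ E]
    {V η p : E → ℝ} {y : E} (hV : DifferentiableAt ℝ V y)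
    (hη : DifferentiableAt ℝ η y) (hp : DifferentiableAt ℝ p y) (e : E) :
    fderiv ℝ (fun y => Real.exp (V y) * (η y ^ 2 * p y)) y e =
      Real.exp (V y) * (η y ^ 2 * (fderiv ℝ V y e * p y) + 2 * η y * fderiv ℝ η y e * p y +
        η y ^ 2 * fderiv ℝ p y e) := by
  have h_deriv : HasFDerivAt (fun y => Real.exp (V y) * (η y ^ 2 * p y)) _ y :=
    hV.hasFDerivAt.exp.mul ((hη.hasFDerivAt.pow 2).mul hp.hasFDerivAt)
  simp only [h_deriv.fderiv, add_apply, smul_apply, smul_eq_mul, nsmul_eq_mul]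
  ring

-- With `X = η * t + ∂ₑη * s` and `Y = ∂ₑV * η * s`, the two sides differ by
-- `exp V * ((2 * X + Y) ^ 2 + 2 * ∂ₑ²V * (η * s) ^ 2)`.
theorem exp_mul_sq_le_of_fderiv_nonneg {E : Type*} [NormedAddCommGroup E] [NormedSpace ℝ E]
    {V η : E → ℝ} {e y : E} (hV : DifferentiableAt ℝ V y)
    (hV_fderiv : DifferentiableAt ℝ (fun z => fderiv ℝ V z e) y)
    (hV_convex : 0 ≤ fderiv ℝ (fun z => fderiv ℝ V z e) y e) (hη : DifferentiableAt ℝ η y)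
    (s t : ℝ) :
    Real.exp (V y) * (fderiv ℝ V y e * (η y * s)) ^ 2 ≤
      4 * (Real.exp (V y) * (η y * t + fderiv ℝ η y e * s) ^ 2) +
        2 * (s ^ 2 * fderiv ℝ (fun z => Real.exp (V z) * (η z ^ 2 * fderiv ℝ V z e)) y e +
          2 * (s * t) * (Real.exp (V y) * (η y ^ 2 * fderiv ℝ V y e))) := by
  rw [fderiv_exp_mul_sq_mul_apply hV hη hV_fderiv]
  have h_square : 0 ≤ Real.exp (V y) *
      (2 * (η y * t + fderiv ℝ η y e * s) + fderiv ℝ V y e * (η y * s)) ^ 2 := by positivity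
  have h_convex : 0 ≤ Real.exp (V y) *
      (fderiv ℝ (fun z => fderiv ℝ V z e) y e * (η y * s) ^ 2) :=
    mul_nonneg (Real.exp_pos _).le (mul_nonneg hV_convex (sq_nonneg _))
  linarith

section Hardy

variable {E : Type*} [NormedAddCommGroup E] [NormedSpace ℝ E] [FiniteDimensional ℝ E]
  [MeasurableSpace E] [BorelSpace E] {μ : Measure E} {e : E} {f h V : E → ℝ}

theorem HasWeakLineDeriv.integrable_and_integral_exp_mul_sq_le_of_hasCompactSupport
    [μ.IsAddHaarMeasure] (hfh : HasWeakLineDeriv f h e μ)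
    (hf_sq : LocallyIntegrable (fun y => f y ^ 2) μ)
    (hh_sq : LocallyIntegrable (fun y => h y ^ 2) μ) (hV : ContDiff ℝ ∞ V)
    (hV_convex : ∀ y, 0 ≤ fderiv ℝ (fun z => fderiv ℝ V z e) y e) {η : E → ℝ}
    (hη : ContDiff ℝ ∞ η) (hη_supp : HasCompactSupport η) :
    Integrable (fun y => Real.exp (V y) * (fderiv ℝ V y e * (η y * f y)) ^ 2) μ ∧
    ∫ y, Real.exp (V y) * (fderiv ℝ V y e * (η y * f y)) ^ 2 ∂μ ≤
      4 * ∫ y, Real.exp (V y) * (η y * h y + fderiv ℝ η y e * f y) ^ 2 ∂μ := by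
  have hV_fderiv : ContDiff ℝ ∞ fun y => fderiv ℝ V y e :=
    (hV.fderiv_right (by simp)).clm_apply contDiff_const
  have hη_fderiv : Continuous fun y => fderiv ℝ η y e := by fun_prop (disch := simp)
  have hη_sq_supp : HasCompactSupport fun y => η y ^ 2 :=
    hη_supp.comp_left (g := (· ^ 2)) (zero_pow two_ne_zero)
  let φ (y : E) : ℝ := Real.exp (V y) * (η y ^ 2 * fderiv ℝ V y e)
  have hφ : ContDiff ℝ ∞ φ := by fun_prop
  have hφ_supp : HasCompactSupport φ := hη_sq_supp.mul_right.mul_left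
  obtain ⟨h_int_test, h_test⟩ :=
    (hfh.sq hf_sq hh_sq).integrable_and_integral_mul_fderiv_add_eq_zero hφ hφ_supp
  have h_exp (y : E) : Real.exp (V y) = Real.exp (V y / 2) ^ 2 := by
    rw [← Real.exp_nat_mul, Nat.cast_ofNat, mul_div_cancel₀ _ two_ne_zero]
  have h_int_left :
      Integrable (fun y => Real.exp (V y) * (fderiv ℝ V y e * (η y * f y)) ^ 2) μ := by
    have h := (memLp_two_mul_of_hasCompactSupport hfh.locallyIntegrable hf_sq
      (χ := fun y => Real.exp (V y / 2) * (fderiv ℝ V y e * η y)) (by fun_prop)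
      hη_supp.mul_left.mul_left).integrable_sq
    simpa only [h_exp, mul_pow, mul_assoc] using h
  have h_int_right : Integrable
      (fun y => Real.exp (V y) * (η y * h y + fderiv ℝ η y e * f y) ^ 2) μ := by
    have h := ((memLp_two_mul_of_hasCompactSupport hfh.locallyIntegrable_deriv hh_sq
        (χ := fun y => Real.exp (V y / 2) * η y) (by fun_prop) hη_supp.mul_left).add
      (memLp_two_mul_of_hasCompactSupport hfh.locallyIntegrable hf_sq
        (χ := fun y => Real.exp (V y / 2) * fderiv ℝ η y e) (by fun_prop)
        (hη_supp.fderiv_apply (𝕜 := ℝ) e).mul_left)).integrable_sq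
    simpa only [h_exp, Pi.add_apply, mul_assoc, ← mul_add, mul_pow] using h
  have h_pointwise (y : E) : Real.exp (V y) * (fderiv ℝ V y e * (η y * f y)) ^ 2 ≤
      4 * (Real.exp (V y) * (η y * h y + fderiv ℝ η y e * f y) ^ 2) +
        2 * (f y ^ 2 * fderiv ℝ φ y e + 2 * (f y * h y) * φ y) :=
    exp_mul_sq_le_of_fderiv_nonneg (hV.differentiable (by simp) y)
      (hV_fderiv.differentiable (by simp) y) (hV_convex y) (hη.differentiable (by simp) y)
      (f y) (h y)
  have h_le := integral_mono h_int_left ((h_int_right.const_mul 4).add (h_int_test.const_mul 2))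
    h_pointwise
  rw [integral_add' (h_int_right.const_mul 4) (h_int_test.const_mul 2), integral_const_mul,
    integral_const_mul, h_test, mul_zero, add_zero] at h_le
  exact ⟨h_int_left, h_le⟩

theorem tendsto_integral_mul_cutoff_add_sq {w : E → ℝ} (hw : AEStronglyMeasurable w μ)
    (hw_nonneg : ∀ y, 0 ≤ w y) (hf : AEStronglyMeasurable f μ) (hh : AEStronglyMeasurable h μ)
    (hf_int : Integrable (fun y => w y * f y ^ 2) μ)
    (hh_int : Integrable (fun y => w y * h y ^ 2) μ) :
    Tendsto (fun n => ∫ y, w y * (cutoff n y * h y + fderiv ℝ (cutoff n) y e * f y) ^ 2 ∂μ) atTop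
      (𝓝 (∫ y, w y * h y ^ 2 ∂μ)) := by
  obtain ⟨C, hC⟩ := exists_abs_fderiv_cutoff_le e
  refine tendsto_integral_of_dominated_convergence
    (fun y => 2 * (w y * h y ^ 2) + 2 * C ^ 2 * (w y * f y ^ 2)) (fun n => ?_)
    ((hh_int.const_mul _).add (hf_int.const_mul _)) (fun n => .of_forall fun y => ?_)
    (.of_forall fun y => ?_)
  · have h_smooth : ContDiff ℝ ∞ (cutoff n : E → ℝ) := contDiff_cutoff n
    have h_deriv : Continuous fun y : E => fderiv ℝ (cutoff n) y e := by fun_prop (disch := simp)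
    exact hw.mul (((h_smooth.continuous.aestronglyMeasurable.mul hh).add
      (h_deriv.aestronglyMeasurable.mul hf)).pow 2)
  · have hC_nonneg : 0 ≤ C := by simpa using (abs_nonneg _).trans (hC 0 0)
    have h_deriv_le : |fderiv ℝ (cutoff n) y e| ≤ C := (hC n y).trans <|
      mul_le_of_le_one_left hC_nonneg (inv_le_one_of_one_le₀ (by simp))
    have h_deriv_sq : fderiv ℝ (cutoff n) y e ^ 2 ≤ C ^ 2 :=
      sq_le_sq.2 (h_deriv_le.trans (le_abs_self C))
    have h_cutoff_sq : cutoff n y ^ 2 ≤ 1 := (sq_le_one_iff_abs_le_one _).2 (abs_cutoff_le_one n y)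
    rw [Real.norm_of_nonneg (mul_nonneg (hw_nonneg y) (sq_nonneg _))]
    calc
      w y * (cutoff n y * h y + fderiv ℝ (cutoff n) y e * f y) ^ 2
      _ ≤ w y * (2 * ((cutoff n y * h y) ^ 2 + (fderiv ℝ (cutoff n) y e * f y) ^ 2)) :=
        mul_le_mul_of_nonneg_left add_sq_le (hw_nonneg y)
      _ = 2 * (w y * (cutoff n y ^ 2 * h y ^ 2) +
          w y * (fderiv ℝ (cutoff n) y e ^ 2 * f y ^ 2)) := by ring
      _ ≤ 2 * (w y * (1 * h y ^ 2) + w y * (C ^ 2 * f y ^ 2)) := by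
        have hwy := hw_nonneg y
        gcongr
      _ = 2 * (w y * h y ^ 2) + 2 * C ^ 2 * (w y * f y ^ 2) := by ring
  · simpa using (((tendsto_cutoff y).mul_const (h y)).add
      ((tendsto_fderiv_cutoff y e).mul_const (f y))).pow 2 |>.const_mul (w y)

theorem HasWeakLineDeriv.integrable_and_integral_exp_mul_sq_le [μ.IsAddHaarMeasure]
    (hfh : HasWeakLineDeriv f h e μ) (hV : ContDiff ℝ ∞ V)
    (hV_convex : ∀ y, 0 ≤ fderiv ℝ (fun z => fderiv ℝ V z e) y e)
    (hf_int : Integrable (fun y => Real.exp (V y) * f y ^ 2) μ)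
    (hh_int : Integrable (fun y => Real.exp (V y) * h y ^ 2) μ) :
    Integrable (fun y => Real.exp (V y) * (fderiv ℝ V y e * f y) ^ 2) μ ∧
      ∫ y, Real.exp (V y) * (fderiv ℝ V y e * f y) ^ 2 ∂μ ≤
        4 * ∫ y, Real.exp (V y) * h y ^ 2 ∂μ := by
  have hf_sq := locallyIntegrable_of_integrable_exp_mul hV.continuous hf_int
  have hh_sq := locallyIntegrable_of_integrable_exp_mul hV.continuous hh_int
  have h_local (n : ℕ) := hfh.integrable_and_integral_exp_mul_sq_le_of_hasCompactSupport hf_sq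
    hh_sq hV hV_convex (contDiff_cutoff n) (hasCompactSupport_cutoff n)
  refine integrable_and_integral_le_of_tendsto (fun n => (h_local n).1)
    (fun n => .of_forall fun y => by positivity) (.of_forall fun y => ?_) (fun n => (h_local n).2)
    ((tendsto_integral_mul_cutoff_add_sq (Continuous.aestronglyMeasurable (by fun_prop))
      (fun y => by positivity) hfh.locallyIntegrable.aestronglyMeasurable
      hfh.locallyIntegrable_deriv.aestronglyMeasurable hf_int hh_int).const_mul 4)
  simpa using ((((tendsto_cutoff y).mul_const (f y)).const_mul (fderiv ℝ V y e)).pow 2).const_mul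
    (Real.exp (V y))

end Hardy

theorem HasWeakLineDeriv.integrable_and_integral_gaussian_mul_sq_le {E : Type*}
    [NormedAddCommGroup E] [InnerProductSpace ℝ E] [FiniteDimensional ℝ E] [MeasurableSpace E]
    [BorelSpace E] {μ : Measure E} [μ.IsAddHaarMeasure] {e : E} {f h : E → ℝ} {a : ℝ} (ha : 0 < a)
    (hfh : HasWeakLineDeriv f h e μ)
    (hf_int : Integrable (fun y => Real.exp (a * ‖y‖ ^ 2) * f y ^ 2) μ)
    (hh_int : Integrable (fun y => Real.exp (a * ‖y‖ ^ 2) * h y ^ 2) μ) :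
    Integrable (fun y => Real.exp (a * ‖y‖ ^ 2) * f y ^ 2 * ⟪y, e⟫_ℝ ^ 2) μ ∧
      a ^ 2 * ∫ y, Real.exp (a * ‖y‖ ^ 2) * f y ^ 2 * ⟪y, e⟫_ℝ ^ 2 ∂μ ≤
        ∫ y, Real.exp (a * ‖y‖ ^ 2) * h y ^ 2 ∂μ := by
  have h_fderiv (y : E) : fderiv ℝ (fun z : E => a * ‖z‖ ^ 2) y e = 2 * a * ⟪y, e⟫_ℝ := by
    have h_deriv := ((hasStrictFDerivAt_norm_sq y).hasFDerivAt).const_mul a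
    rw [h_deriv.fderiv]
    simp only [smul_apply, coe_innerSL_apply, nsmul_eq_mul, Nat.cast_ofNat, smul_eq_mul]
    ring
  have h_convex (y : E) :
      0 ≤ fderiv ℝ (fun z => fderiv ℝ (fun z : E => a * ‖z‖ ^ 2) z e) y e := by
    simp only [h_fderiv]
    have h_inner : HasFDerivAt (fun z : E => ⟪z, e⟫_ℝ) _ y :=
      (hasFDerivAt_id y).inner ℝ (hasFDerivAt_const e y)
    have h_second : fderiv ℝ (fun z : E => 2 * a * ⟪z, e⟫_ℝ) y e = 2 * a * ⟪e, e⟫_ℝ := by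
      simp [(h_inner.const_mul (2 * a)).fderiv]
    rw [h_second]
    exact mul_nonneg (mul_nonneg zero_le_two ha.le) real_inner_self_nonneg
  obtain ⟨h_int, h_le⟩ := hfh.integrable_and_integral_exp_mul_sq_le
    (contDiff_const.mul (contDiff_norm_sq ℝ)) h_convex hf_int hh_int
  have h_integrand (y : E) :
      Real.exp (a * ‖y‖ ^ 2) * (fderiv ℝ (fun z : E => a * ‖z‖ ^ 2) y e * f y) ^ 2 =
        4 * a ^ 2 * (Real.exp (a * ‖y‖ ^ 2) * f y ^ 2 * ⟪y, e⟫_ℝ ^ 2) := by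
    rw [h_fderiv]
    ring
  simp only [h_integrand, integral_const_mul] at h_int h_le
  have h_const : IsUnit (4 * a ^ 2) := (by positivity : 4 * a ^ 2 ≠ 0).isUnit
  exact ⟨(integrable_const_mul_iff h_const _).1 h_int, by linarith⟩

theorem integrable_and_integral_gaussian_mul_norm_sq_le {ι E : Type*} [Fintype ι]
    [NormedAddCommGroup E] [InnerProductSpace ℝ E] [MeasurableSpace E] [BorelSpace E]
    {μ : Measure E} [μ.IsAddHaarMeasure] (b : OrthonormalBasis ι ℝ E) {f : E → ℝ} {h : ι → E → ℝ}
    {a : ℝ} (ha : 0 < a) (hfh : ∀ i, HasWeakLineDeriv f (h i) (b i) μ)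
    (hf_int : Integrable (fun y => Real.exp (a * ‖y‖ ^ 2) * f y ^ 2) μ)
    (hh_int : ∀ i, Integrable (fun y => Real.exp (a * ‖y‖ ^ 2) * h i y ^ 2) μ) :
    Integrable (fun y => Real.exp (a * ‖y‖ ^ 2) * f y ^ 2 * ‖y‖ ^ 2) μ ∧
      a ^ 2 * ∫ y, Real.exp (a * ‖y‖ ^ 2) * f y ^ 2 * ‖y‖ ^ 2 ∂μ ≤
        ∫ y, Real.exp (a * ‖y‖ ^ 2) * ∑ i, h i y ^ 2 ∂μ := by
  have : FiniteDimensional ℝ E := b.toBasis.finiteDimensional_of_finite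
  have h_component (i : ι) :=
    (hfh i).integrable_and_integral_gaussian_mul_sq_le ha hf_int (hh_int i)
  have h_norm (y : E) : Real.exp (a * ‖y‖ ^ 2) * f y ^ 2 * ‖y‖ ^ 2 =
      ∑ i, Real.exp (a * ‖y‖ ^ 2) * f y ^ 2 * ⟪y, b i⟫_ℝ ^ 2 := by
    rw [← Finset.mul_sum, b.sum_sq_inner_left]
  simp only [h_norm, Finset.mul_sum (s := Finset.univ) (f := fun i => h i _ ^ 2)]
  refine ⟨integrable_finsetSum _ fun i _ => (h_component i).1, ?_⟩
  rw [integral_finsetSum _ fun i _ => (h_component i).1, integral_finsetSum _ fun i _ => hh_int i,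
    Finset.mul_sum]
  exact Finset.sum_le_sum fun i _ => (h_component i).2

-- The integral of a non-measurable `h * φ` is the junk value `0`. If `h * φ` happens to be
-- measurable, adding to `φ` a cutoff `χ` with `h * χ` non-measurable reduces to that case.
theorem integral_mul_fderiv_eq_zero_of_not_aestronglyMeasurable {E : Type*} [NormedAddCommGroup E]
    [NormedSpace ℝ E] [FiniteDimensional ℝ E] [MeasurableSpace E] [BorelSpace E] {μ : Measure E}
    {e : E} {f h : E → ℝ} (hf : LocallyIntegrable f μ) (hh : ¬AEStronglyMeasurable h μ)
    (hfh : ∀ φ : E → ℝ, ContDiff ℝ ∞ φ → HasCompactSupport φ →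
      ∫ y, f y * fderiv ℝ φ y e ∂μ = -∫ y, h y * φ y ∂μ)
    {φ : E → ℝ} (hφ : ContDiff ℝ ∞ φ) (hφ_supp : HasCompactSupport φ) :
    ∫ y, f y * fderiv ℝ φ y e ∂μ = 0 := by
  have h_zero {ψ : E → ℝ} (hψ : ContDiff ℝ ∞ ψ) (hψ_supp : HasCompactSupport ψ)
      (h_meas : ¬AEStronglyMeasurable (fun y => h y * ψ y) μ) :
      ∫ y, f y * fderiv ℝ ψ y e ∂μ = 0 := by
    rw [hfh ψ hψ hψ_supp, integral_undef fun h_int => h_meas h_int.aestronglyMeasurable, neg_zero]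
  by_cases hφ_meas : AEStronglyMeasurable (fun y => h y * φ y) μ
  swap
  · exact h_zero hφ hφ_supp hφ_meas
  obtain ⟨n, hn⟩ : ∃ n, ¬AEStronglyMeasurable (fun y => h y * cutoff n y) μ := by
    by_contra! h_meas
    exact hh <| aestronglyMeasurable_of_tendsto_ae atTop h_meas <| .of_forall fun y => by
      simpa using (tendsto_cutoff y).const_mul (h y)
  set χ : E → ℝ := cutoff n
  have hχ : ContDiff ℝ ∞ χ := contDiff_cutoff n
  have hχ_supp : HasCompactSupport χ := hasCompactSupport_cutoff n
  have h_sum : ∫ y, f y * fderiv ℝ (fun y => φ y + χ y) y e ∂μ = 0 :=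
    h_zero (hφ.add hχ) (hφ_supp.add hχ_supp) fun h_meas => hn <| by
      have h_diff := h_meas.sub hφ_meas
      simpa only [Pi.sub_def, mul_add, add_sub_cancel_left] using h_diff
  have h_int {ψ : E → ℝ} (hψ : ContDiff ℝ ∞ ψ) (hψ_supp : HasCompactSupport ψ) :
      Integrable (fun y => f y * fderiv ℝ ψ y e) μ :=
    hf.integrable_smul_right_of_hasCompactSupport (by fun_prop (disch := simp))
      (hψ_supp.fderiv_apply (𝕜 := ℝ) e)
  have h_fderiv (y : E) :
      fderiv ℝ (fun y => φ y + χ y) y e = fderiv ℝ φ y e + fderiv ℝ χ y e := by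
    rw [fderiv_fun_add (hφ.differentiable (by simp) y) (hχ.differentiable (by simp) y), add_apply]
  simpa only [h_fderiv, mul_add, integral_add (h_int hφ hφ_supp) (h_int hχ hχ_supp),
    h_zero hχ hχ_supp hn, add_zero] using h_sum

-- `HasWeakGradient` allows `g` to have non-measurable components; these are replaced by `0`.
theorem HasWeakGradient.exists_hasWeakLineDeriv {N : ℕ} {f : EuclideanSpace ℝ (Fin N) → ℝ}
    {g : EuclideanSpace ℝ (Fin N) → EuclideanSpace ℝ (Fin N)} (hfg : HasWeakGradient f g)
    (hg_sq : LocallyIntegrable (fun y => ‖g y‖ ^ 2)) (i : Fin N) :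
    ∃ h, HasWeakLineDeriv f h (EuclideanSpace.single i 1) volume ∧ ∀ y, h y ^ 2 ≤ g y i ^ 2 := by
  obtain ⟨hf, h_test⟩ := hfg
  by_cases hg : AEStronglyMeasurable (fun y => g y i)
  · have h_loc : LocallyIntegrable (fun y => g y i) := by
      refine ((locallyIntegrable_const (1 : ℝ)).add hg_sq).mono hg (.of_forall fun y => ?_)
      have h_coord : ‖g y i‖ ≤ ‖g y‖ := PiLp.norm_apply_le (g y) i
      rw [Pi.add_apply, Real.norm_of_nonneg (add_nonneg zero_le_one (sq_nonneg _))]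
      nlinarith [sq_nonneg (‖g y‖ - 1)]
    exact ⟨fun y => g y i, ⟨hf, h_loc, fun φ hφ hφ_supp => h_test φ hφ hφ_supp i⟩, fun y => le_rfl⟩
  · refine ⟨0, ⟨hf, locallyIntegrable_zero, fun φ hφ hφ_supp => ?_⟩, fun y => by simp [sq_nonneg]⟩
    rw [integral_mul_fderiv_eq_zero_of_not_aestronglyMeasurable hf hg
      (fun φ hφ hφ_supp => h_test φ hφ hφ_supp i) hφ hφ_supp]
    simp

/-- Weighted Hardy-type inequality. -/
theorem stmt_7 (N : ℕ) (hN : 1 ≤ N) :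
    ∃ c > (0 : ℝ),
      ∀ (f : EuclideanSpace ℝ (Fin N) → ℝ)
        (g : EuclideanSpace ℝ (Fin N) → EuclideanSpace ℝ (Fin N)),
        HasWeakGradient f g →
        Integrable (fun y : EuclideanSpace ℝ (Fin N) =>
          Real.exp (‖y‖ ^ 2 / 4) * (f y) ^ 2) →
        Integrable (fun y : EuclideanSpace ℝ (Fin N) =>
          Real.exp (‖y‖ ^ 2 / 4) * ‖g y‖ ^ 2) →
        Integrable (fun y : EuclideanSpace ℝ (Fin N) =>
          Real.exp (‖y‖ ^ 2 / 4) * (f y) ^ 2 * ‖y‖ ^ 2) ∧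
        ∫ y : EuclideanSpace ℝ (Fin N), Real.exp (‖y‖ ^ 2 / 4) * (f y) ^ 2 * ‖y‖ ^ 2
          ≤ c * ∫ y : EuclideanSpace ℝ (Fin N), Real.exp (‖y‖ ^ 2 / 4) * ‖g y‖ ^ 2 := by
  refine ⟨16, by norm_num, fun f g hfg hf_int hg_int => ?_⟩
  simp only [div_eq_inv_mul _ (4 : ℝ)] at *
  choose h hfh h_le using fun i => hfg.exists_hasWeakLineDeriv
    (locallyIntegrable_of_integrable_exp_mul (by fun_prop) hg_int) i
  have h_sum_le (y : EuclideanSpace ℝ (Fin N)) : ∑ i, h i y ^ 2 ≤ ‖g y‖ ^ 2 := by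
    rw [EuclideanSpace.real_norm_sq_eq]
    exact Finset.sum_le_sum fun i _ => h_le i y
  have hh_int (i : Fin N) : Integrable fun y => Real.exp (4⁻¹ * ‖y‖ ^ 2) * h i y ^ 2 := by
    refine hg_int.mono' (Continuous.aestronglyMeasurable (by fun_prop) |>.mul
      ((hfh i).locallyIntegrable_deriv.aestronglyMeasurable.pow 2)) (.of_forall fun y => ?_)
    rw [Real.norm_of_nonneg (by positivity)]
    exact mul_le_mul_of_nonneg_left ((Finset.single_le_sum (fun i _ => sq_nonneg (h i y))
      (Finset.mem_univ i)).trans (h_sum_le y)) (Real.exp_pos _).le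
  obtain ⟨h_int, hardy⟩ := integrable_and_integral_gaussian_mul_norm_sq_le
    (EuclideanSpace.basisFun (Fin N) ℝ) (by norm_num) (by simpa using hfh) hf_int hh_int
  have h_mono : ∫ y, Real.exp (4⁻¹ * ‖y‖ ^ 2) * ∑ i, h i y ^ 2 ≤
      ∫ y, Real.exp (4⁻¹ * ‖y‖ ^ 2) * ‖g y‖ ^ 2 :=
    integral_mono_of_nonneg (.of_forall fun y => by positivity) hg_int
      (.of_forall fun y => mul_le_mul_of_nonneg_left (h_sum_le y) (Real.exp_pos _).le)
  exact ⟨h_int, by linarith⟩
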